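/- If V is an irreducible quasi-finite module of non-zero level over an untwisted fgc EALA E_{n+1}, then up to a twist by an automorphism coming from the action of GL(n+1,ℤ), one may assume that K_0 acts by a non-zero scalar c_0 ≠ 0 while K_1,…,K_n act by zero (c_1 = … = c_n = 0). -/

import Mathlib

open scoped TensorProduct
open Function

noncomputable section

universe u v w

/-! ### Root spaces and triangular data for a finite-dimensional simple Lie algebra -/

/-- The root space of a linear functional `α` on a subalgebra `H` of `𝕘`. -/
def rootSpaceOf {𝕘 : Type u} [LieRing 𝕘] [LieAlgebra ℂ 𝕘]
    (H : LieSubalgebra ℂ 𝕘) (α : Module.Dual ℂ H) : Submodule ℂ 𝕘 where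
  carrier := {x | ∀ h : H, ⁅(h : 𝕘), x⁆ = α h • x}
  add_mem' := by
    intro a b ha hb
    simp only [Set.mem_setOf_eq] at *
    intro h
    rw [lie_add, ha h, hb h, smul_add]
  zero_mem' := by
    simp only [Set.mem_setOf_eq]
    intro h; simp
  smul_mem' := by
    intro c x hx
    simp only [Set.mem_setOf_eq] at *
    intro h
    rw [lie_smul, hx h, smul_comm]

/-- Triangular decomposition data for `𝕘`: a Cartan subalgebra `H`, a choice of
positive roots and corresponding coroots. -/
structure TriangularData (𝕘 : Type u) [LieRing 𝕘] [LieAlgebra ℂ 𝕘] where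
  H : LieSubalgebra ℂ 𝕘
  isCartan : H.IsCartanSubalgebra
  posRoots : Set (Module.Dual ℂ H)
  zero_not_mem : (0 : Module.Dual ℂ H) ∉ posRoots
  coroot : Module.Dual ℂ H → H

namespace TriangularData

variable {𝕘 : Type u} [LieRing 𝕘] [LieAlgebra ℂ 𝕘] (td : TriangularData 𝕘)

/-- The set `Δ_𝕘^×` of non-zero roots. -/
def roots : Set (Module.Dual ℂ td.H) := td.posRoots ∪ (fun α => -α) '' td.posRoots

/-- The nilpotent subalgebra `n⁺`, the span of the positive root spaces. -/
def nPlus : Submodule ℂ 𝕘 := ⨆ α ∈ td.posRoots, rootSpaceOf td.H α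

/-- The nilpotent subalgebra `n⁻`, the span of the negative root spaces. -/
def nMinus : Submodule ℂ 𝕘 := ⨆ α ∈ td.posRoots, rootSpaceOf td.H (-α)

/-- `λ ∈ P_𝕘⁺`: a dominant integral weight, i.e. `λ(α^∨) ∈ ℤ₊` for positive roots `α`. -/
def IsDominantIntegral (l : Module.Dual ℂ td.H) : Prop :=
  ∀ α ∈ td.posRoots, ∃ n : ℕ, l (td.coroot α) = (n : ℂ)

end TriangularData

/-! ### Untwisted fgc extended affine Lie algebras -/

/-- A realization of an untwisted fgc extended affine Lie algebra of nullity `n+1`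
(or of the toroidal Lie algebra `τ_{n+1}^tor`) inside a Lie algebra `E`:
`E = L(𝕘) ⊕ C ⊕ D` where `emb k x` is `x ⊗ t^k ∈ 𝕘 ⊗ A_{n+1}`, the subspace `C` is a
(non-zero) centre of the central extension `L(𝕘) ⊕ C` of the multiloop algebra with
`K 0, …, K n` spanning its degree-zero part, and `Dsub` is a graded subalgebra of the
skew-symmetric derivations of `A_{n+1}` containing the degree derivations `d 0, …, d n`.
`B` is the normalized invariant bilinear form of `𝕘`. -/
structure EALARealization (n : ℕ) (𝕘 : Type u) [LieRing 𝕘] [LieAlgebra ℂ 𝕘]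
    (E : Type v) [LieRing E] [LieAlgebra ℂ E] where
  B : 𝕘 →ₗ[ℂ] 𝕘 →ₗ[ℂ] ℂ
  B_ne_zero : B ≠ 0
  emb : (Fin (n + 1) → ℤ) → 𝕘 →ₗ[ℂ] E
  K : Fin (n + 1) → E
  d : Fin (n + 1) → E
  C : Submodule ℂ E
  Dsub : Submodule ℂ E
  C_ne_bot : C ≠ ⊥
  K_mem_C : ∀ i, K i ∈ C
  d_mem_Dsub : ∀ i, d i ∈ Dsub
  K_central : ∀ i (e : E), ⁅K i, e⁆ = 0
  C_bracket_loop : ∀ c ∈ C, ∀ (k : Fin (n + 1) → ℤ) (x : 𝕘), ⁅c, emb k x⁆ = 0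
  C_bracket_C : ∀ c ∈ C, ∀ c' ∈ C, ⁅c, c'⁆ = 0
  d_bracket_d : ∀ i j, ⁅d i, d j⁆ = 0
  d_bracket_emb : ∀ i (k : Fin (n + 1) → ℤ) (x : 𝕘),
    ⁅d i, emb k x⁆ = ((k i : ℂ)) • emb k x
  d_bracket_C : ∀ i, ∀ c ∈ C, ⁅d i, c⁆ ∈ C
  Dsub_bracket_C : ∀ dd ∈ Dsub, ∀ c ∈ C, ⁅dd, c⁆ ∈ C
  Dsub_bracket_Dsub : ∀ dd ∈ Dsub, ∀ dd' ∈ Dsub, ⁅dd, dd'⁆ ∈ Dsub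
  emb_bracket_mem : ∀ (k l : Fin (n + 1) → ℤ) (x y : 𝕘),
    ⁅emb k x, emb l y⁆ - emb (k + l) ⁅x, y⁆ ∈ C
  emb_bracket_opp : ∀ (k : Fin (n + 1) → ℤ) (x y : 𝕘),
    ⁅emb k x, emb (-k) y⁆ = emb 0 ⁅x, y⁆ + (B x y) • ∑ i, ((k i : ℂ)) • K i
  span_top : (⨆ k : Fin (n + 1) → ℤ, LinearMap.range (emb k)) ⊔ C ⊔ Dsub = ⊤

namespace EALARealization

variable {n : ℕ} {𝕘 : Type u} {E : Type v} [LieRing 𝕘] [LieAlgebra ℂ 𝕘]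
  [LieRing E] [LieAlgebra ℂ E]
variable (A : EALARealization n 𝕘 E)

/-- The multiloop part `𝕘 ⊗ A_{n+1}` of `E`. -/
def loopPart : Submodule ℂ E := ⨆ k : Fin (n + 1) → ℤ, LinearMap.range (A.emb k)

/-- The core `(E_{n+1})_c = L(𝕘) ⊕ C` of `E`. -/
def core : Submodule ℂ E := A.loopPart ⊔ A.C

/-- The homogeneous component of `E` of degree `k ∈ ℤ^{n+1}` (the simultaneous
eigenspace of the degree derivations `d 0, …, d n`). -/
def grade (k : Fin (n + 1) → ℤ) : Submodule ℂ E where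
  carrier := {e | ∀ i, ⁅A.d i, e⁆ = ((k i : ℂ)) • e}
  add_mem' := by
    intro a b ha hb
    simp only [Set.mem_setOf_eq] at *
    intro i
    rw [lie_add, ha i, hb i, smul_add]
  zero_mem' := by
    simp only [Set.mem_setOf_eq]
    intro i; simp
  smul_mem' := by
    intro c e he
    simp only [Set.mem_setOf_eq] at *
    intro i
    rw [lie_smul, he i, smul_comm]

/-- The homogeneous component `((E_{n+1})_c)_k` of the core. -/
def coreGrade (k : Fin (n + 1) → ℤ) : Submodule ℂ E := A.core ⊓ A.grade k

/-- The subalgebra `𝕙 ⊗ A_{n+1}` (for the triangular data `td`). -/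
def hLoop (td : TriangularData 𝕘) : Submodule ℂ E :=
  ⨆ k : Fin (n + 1) → ℤ, Submodule.map (A.emb k) td.H.toSubmodule

variable (V : Type w) [AddCommGroup V] [Module ℂ V] [LieRingModule E V] [LieModule ℂ E V]

/-- The simultaneous eigenspace `V_μ` of the degree derivations `d 0, …, d n`. -/
def dWeight (μ : Fin (n + 1) → ℂ) : Submodule ℂ V where
  carrier := {v | ∀ i, ⁅A.d i, v⁆ = μ i • v}
  add_mem' := by
    intro a b ha hb
    simp only [Set.mem_setOf_eq] at *
    intro i
    rw [lie_add, ha i, hb i, smul_add]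
  zero_mem' := by
    simp only [Set.mem_setOf_eq]
    intro i; simp
  smul_mem' := by
    intro c v hv
    simp only [Set.mem_setOf_eq] at *
    intro i
    rw [lie_smul, hv i, smul_comm]

/-- A quasi-finite module: the direct sum of its `D`-weight spaces, all of which are
finite-dimensional. -/
def IsQuasiFinite : Prop :=
  (⨆ μ : Fin (n + 1) → ℂ, A.dWeight V μ) = ⊤ ∧
    ∀ μ : Fin (n + 1) → ℂ, FiniteDimensional ℂ (A.dWeight V μ)

/-- A uniformly bounded submodule: the dimensions of its graded components are
bounded. -/
def IsUniformlyBoundedSub (W : Submodule ℂ V) : Prop :=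
  ∃ N : ℕ, ∀ μ : Fin (n + 1) → ℂ,
    Module.finrank ℂ ↥(W ⊓ A.dWeight V μ) ≤ N

/-- The `H`-weight space of `V` of weight `(η, c, m)`, where `η ∈ 𝕙^*` and `c, m` are
the eigenvalue tuples of `K 0, …, K n` and `d 0, …, d n` respectively. -/
def hWeightSp (td : TriangularData 𝕘)
    (η : Module.Dual ℂ td.H) (c m : Fin (n + 1) → ℂ) : Submodule ℂ V where
  carrier := {v | (∀ x : td.H, ⁅A.emb 0 (x : 𝕘), v⁆ = η x • v) ∧
    (∀ i, ⁅A.K i, v⁆ = c i • v) ∧ (∀ i, ⁅A.d i, v⁆ = m i • v)}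
  add_mem' := by
    intro a b ha hb
    simp only [Set.mem_setOf_eq] at *
    refine ⟨fun x => ?_, fun i => ?_, fun i => ?_⟩
    · rw [lie_add, ha.1 x, hb.1 x, smul_add]
    · rw [lie_add, ha.2.1 i, hb.2.1 i, smul_add]
    · rw [lie_add, ha.2.2 i, hb.2.2 i, smul_add]
  zero_mem' := by
    simp only [Set.mem_setOf_eq]
    exact ⟨fun x => by simp, fun i => by simp, fun i => by simp⟩
  smul_mem' := by
    intro t v hv
    simp only [Set.mem_setOf_eq] at *
    refine ⟨fun x => ?_, fun i => ?_, fun i => ?_⟩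
    · rw [lie_smul, hv.1 x, smul_comm]
    · rw [lie_smul, hv.2.1 i, smul_comm]
    · rw [lie_smul, hv.2.2 i, smul_comm]

/-- An integrable module: a weight module for `H = 𝕙 ⊕ span{K i} ⊕ span{d i}` with
finite-dimensional weight spaces on which all the operators `x_α ⊗ t^k` act locally
nilpotently. -/
def IsIntegrable (td : TriangularData 𝕘) : Prop :=
  (⨆ η : Module.Dual ℂ td.H, ⨆ c : Fin (n + 1) → ℂ, ⨆ m : Fin (n + 1) → ℂ,
      A.hWeightSp V td η c m) = ⊤ ∧
  (∀ (η : Module.Dual ℂ td.H) (c m : Fin (n + 1) → ℂ),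
      FiniteDimensional ℂ (A.hWeightSp V td η c m)) ∧
  ∀ α ∈ td.roots, ∀ x ∈ rootSpaceOf td.H α, ∀ (k : Fin (n + 1) → ℤ) (v : V),
    ∃ m : ℕ, ((LieModule.toEnd ℂ E V (A.emb k x)) ^ m) v = 0

/-- A weakly integrable module: an `H`-weight module with finite-dimensional weight
spaces on which the root vectors of `𝕘` act locally nilpotently. -/
def IsWeaklyIntegrable (td : TriangularData 𝕘) : Prop :=
  (⨆ η : Module.Dual ℂ td.H, ⨆ c : Fin (n + 1) → ℂ, ⨆ m : Fin (n + 1) → ℂ,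
      A.hWeightSp V td η c m) = ⊤ ∧
  (∀ (η : Module.Dual ℂ td.H) (c m : Fin (n + 1) → ℂ),
      FiniteDimensional ℂ (A.hWeightSp V td η c m)) ∧
  ∀ v : V, ∀ α ∈ td.roots, ∃ m : ℕ, ∀ x ∈ rootSpaceOf td.H α,
    ((LieModule.toEnd ℂ E V (A.emb 0 x)) ^ m) v = 0

/-- `V` has level zero: each central element `K i` acts trivially. -/
def IsLevelZero : Prop := ∀ i, ∀ v : V, ⁅A.K i, v⁆ = 0

/-- The core acts non-trivially on `V`. -/
def CoreActsNontrivially : Prop := ∃ e ∈ A.core, ∃ v : V, ⁅e, v⁆ ≠ 0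

/-- A vector `v` is a restricted generalized highest weight (GHW) vector: it is
non-zero and annihilated by all homogeneous components `((E_{n+1})_c)_k` of the core
with `k ≥ (N, …, N)` for some `N ∈ ℕ`. -/
def IsRestrictedGHWVector (v : V) : Prop :=
  v ≠ 0 ∧ ∃ N : ℕ, ∀ k : Fin (n + 1) → ℤ, (∀ i, (N : ℤ) ≤ k i) →
    ∀ e ∈ A.coreGrade k, ⁅e, v⁆ = 0

/-- A restricted generalized highest weight (GHW) module with GHW vector of
`D`-weight `Λ₀`. -/
def IsRestrictedGHWModule (Λ₀ : Fin (n + 1) → ℂ) : Prop :=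
  ∃ v₀ : V, v₀ ∈ A.dWeight V Λ₀ ∧ A.IsRestrictedGHWVector V v₀

/-- The "highest weight space" `V(+) = {v ∈ V | (n⁺ ⊗ A_{n+1}) v = 0}`. -/
def VplusN (td : TriangularData 𝕘) : Submodule ℂ V where
  carrier := {v | ∀ (k : Fin (n + 1) → ℤ), ∀ x ∈ td.nPlus, ⁅A.emb k x, v⁆ = 0}
  add_mem' := by
    intro a b ha hb
    simp only [Set.mem_setOf_eq] at *
    intro k x hx
    rw [lie_add, ha k x hx, hb k x hx, add_zero]
  zero_mem' := by
    simp only [Set.mem_setOf_eq]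
    intro k x hx; simp
  smul_mem' := by
    intro c v hv
    simp only [Set.mem_setOf_eq] at *
    intro k x hx
    rw [lie_smul, hv k x hx, smul_zero]

end EALARealization

/-- `W` is an irreducible module over the subalgebra `S` of `E` (`W` is a non-zero
`S`-invariant subspace with no proper non-zero `S`-invariant subspaces). -/
def IsIrreducibleOver {E : Type v} {V : Type w} [LieRing E] [LieAlgebra ℂ E]
    [AddCommGroup V] [Module ℂ V] [LieRingModule E V] [LieModule ℂ E V]
    (S : Submodule ℂ E) (W : Submodule ℂ V) : Prop :=
  W ≠ ⊥ ∧ (∀ s ∈ S, ∀ w ∈ W, ⁅s, w⁆ ∈ W) ∧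
    ∀ U : Submodule ℂ V, U ≤ W → (∀ s ∈ S, ∀ u ∈ U, ⁅s, u⁆ ∈ U) → U = ⊥ ∨ U = W

/-- An irreducible (Lie) module: non-zero, with no proper non-zero invariant subspaces. -/
def IsIrreducibleLieModule (E : Type v) (V : Type w) [LieRing E] [LieAlgebra ℂ E]
    [AddCommGroup V] [Module ℂ V] [LieRingModule E V] [LieModule ℂ E V] : Prop :=
  (∃ v : V, v ≠ 0) ∧
    ∀ U : Submodule ℂ V, (∀ (e : E), ∀ v ∈ U, ⁅e, v⁆ ∈ U) → U = ⊥ ∨ U = ⊤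


/-! Write `φ k = ∑ kᵢ cᵢ` for the level form on `ℤⁿ⁺¹` and `Γ ⊆ ℂ` for its image. Once `Γ` is
infinite cyclic, a basis of `ℤⁿ⁺¹` whose last `n` members span `ker φ` gives the matrix `P`.

To see that `Γ` is cyclic, choose `x` with `B(x, x) ≠ 0`, a section `σ` of `φ` over `Γ`, and let
`a s` be the action of `x ⊗ t^σ(s)`. With respect to `d = ∑ cᵢ dᵢ` these operators have degree
`s`, opposite ones satisfy `[a s, a (-s)] = b s`, and their commutators are central. On a simple
subquotient a commutator `[a s, a t]` is zero or invertible. It is zero when `s + t ≠ 0`: otherwise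
two operators of degree `0` would have a nonzero scalar commutator on a finite-dimensional weight
space, contradicting the trace. Hence the number operators `a t * a (-t)` commute and have a joint
eigenvector `v` of some weight `κ`. Applying a word in suitable `a s` to `v` gives a nonzero joint
eigenvector, of weight `κ` plus the sum of the word, whose eigenvalues determine the excess of the
word. As weight spaces are finite-dimensional, words of a given sum have finitely many excesses,
which forces the suitable `s` to be the positive elements of a linear order on `Γ` with finite
intervals, and such a group is cyclic. -/

/-! ### Eigenspaces and invariant submodules -/

section Eigenspaces

variable {K V : Type*} [Field K] [AddCommGroup V] [Module K V]

lemma finiteDimensional_eigenspace_of_iSup_eq_top {ι : Type*} {f : Module.End K V}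
    {X : ι → Submodule K V} {ν : ι → K} (hν : Injective ν) (hle : ∀ i, X i ≤ f.eigenspace (ν i))
    (htop : ⨆ i, X i = ⊤) (hfin : ∀ i, FiniteDimensional K (X i)) (l : K) :
    FiniteDimensional K (f.eigenspace l) := by
  let Y : K → Submodule K V := fun l => ⨆ i : {i // ν i = l}, X i
  have hYle : Y ≤ f.eigenspace := fun l => iSup_le fun ⟨i, hi⟩ => hi ▸ hle i
  have hYtop : iSup Y = ⊤ :=
    top_le_iff.1 <| htop ▸ iSup_le fun i => le_iSup_of_le (ν i) <|
      le_iSup (fun j : {j // ν j = ν i} => X j) ⟨i, rfl⟩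
  have : Subsingleton {i // ν i = l} :=
    ⟨fun i j => Subtype.ext (hν (i.2.trans j.2.symm))⟩
  rw [← (f.eigenspaces_iSupIndep.le_iff_eq_of_iSup_eq_top hYtop).1 hYle]
  exact Submodule.finiteDimensional_iSup _

lemma exists_common_eigenvector_of_commute [IsAlgClosed K] [FiniteDimensional K V] [Nontrivial V]
    {ι : Type*} {N : ι → Module.End K V} (hN : ∀ i j, Commute (N i) (N j)) :
    ∃ v ≠ 0, ∃ χ : ι → K, ∀ i, N i v = χ i • v := by
  let R := Algebra.adjoin K (Set.range N)
  have : IsArtinian R V := isArtinian_of_tower K inferInstance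
  obtain ⟨S, hS⟩ := IsAtomic.exists_atom (Submodule R V)
  have : IsSimpleModule R S := isSimpleModule_iff_isAtom.2 hS
  have : FiniteDimensional K S := inferInstanceAs (FiniteDimensional K (S.restrictScalars K))
  let n : ι → R := fun i => ⟨N i, Algebra.subset_adjoin ⟨i, rfl⟩⟩
  have hcomm (i : ι) (r : R) : r * n i = n i * r := by
    have hle : R ≤ Subalgebra.centralizer K {N i} :=
      Algebra.adjoin_le <| by
        rintro _ ⟨j, rfl⟩
        exact (Set.mem_centralizer_iff.2 <| by simpa using (hN i j).eq)
    exact Subtype.ext (Subalgebra.mem_centralizer_iff K |>.1 (hle r.2) _ rfl).symm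
  let g (i : ι) : Module.End R S :=
    { toFun := fun w => n i • w
      map_add' := smul_add _
      map_smul' := fun r w => by rw [RingHom.id_apply, smul_smul, smul_smul, hcomm] }
  choose χ hχ using fun i =>
    (IsSimpleModule.algebraMap_end_bijective_of_isAlgClosed K (A := R) (V := S)).2 (g i)
  have := IsSimpleModule.nontrivial R S
  obtain ⟨v, hv⟩ := exists_ne (0 : S)
  exact ⟨v, Subtype.coe_ne_coe.2 hv, χ, fun i =>
    (congrArg Subtype.val (LinearMap.congr_fun (hχ i) v)).symm⟩

lemma eq_zero_of_lie_eq_smul_one [CharZero K] {f P Q : Module.End K V} {κ t : K}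
    [FiniteDimensional K (f.eigenspace κ)] (hκ : f.HasEigenvalue κ)
    (hP : Commute f P) (hQ : Commute f Q) (hPQ : ⁅P, Q⁆ = t • 1) : t = 0 := by
  have hP' := Module.End.mapsTo_genEigenspace_of_comm hP κ 1
  have hQ' := Module.End.mapsTo_genEigenspace_of_comm hQ κ 1
  let p := P.restrict hP'
  let q := Q.restrict hQ'
  have hpq : p * q - q * p = t • 1 :=
    LinearMap.ext fun v => Subtype.ext (LinearMap.congr_fun hPQ v)
  have htr := congrArg (LinearMap.trace K _) hpq
  rw [map_sub, LinearMap.trace_mul_comm, sub_self, map_smul, LinearMap.trace_one, smul_eq_mul,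
    eq_comm, mul_eq_zero, Nat.cast_eq_zero, Submodule.finrank_eq_zero] at htr
  exact htr.resolve_right hκ

lemma finite_of_joint_eigenvectors {ι τ : Type*} {N : τ → Module.End K V}
    (hN : ∀ s t, Commute (N s) (N t)) {χ : ι → τ → K}
    (hχ : Injective χ) {x : ι → V} (hx : ∀ i, x i ≠ 0) (hNx : ∀ i t, N t (x i) = χ i t • x i)
    (E : Submodule K V) [FiniteDimensional K E] (hE : ∀ i, x i ∈ E) : Finite ι := by
  have hindep := (Module.End.independent_iInf_maxGenEigenspace_of_forall_mapsTo N fun i j φ =>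
    Module.End.mapsTo_maxGenEigenspace_of_comm (hN j i) φ).comp hχ
  have hmem (i : ι) : x i ∈ ⨅ t, (N t).maxGenEigenspace (χ i t) := by
    refine (Submodule.mem_iInf _).2 fun t => ?_
    exact (N t).genEigenspace (χ i t) |>.monotone le_top (Module.End.mem_eigenspace_iff.2 (hNx i t))
  have hlin : LinearIndependent K x := hindep.linearIndependent _ hmem hx
  let y (i : ι) : E := ⟨x i, hE i⟩
  exact (LinearIndependent.of_comp E.subtype (v := y) hlin).finite

end Eigenspaces

section Irreducibility

lemma adjoin_smul_mem {K R M : Type*} [CommRing K] [Ring R] [Algebra K R] [AddCommGroup M]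
    [Module K M] [Module R M] [IsScalarTower K R M] {S : Set R} {W : Submodule K M}
    (hW : ∀ x ∈ S, ∀ w ∈ W, x • w ∈ W) {r : R} (hr : r ∈ Algebra.adjoin K S) {w : M}
    (hw : w ∈ W) : r • w ∈ W := by
  induction hr using Algebra.adjoin_induction generalizing w with
  | mem x hx => exact hW x hx w hw
  | algebraMap k => exact (algebraMap_smul R k w).symm ▸ W.smul_mem k hw
  | add x y _ _ hx hy => exact add_smul x y w ▸ W.add_mem (hx hw) (hy hw)
  | mul x y _ _ hx hy => exact mul_smul x y w ▸ hx (hy hw)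

lemma eq_bot_or_eq_top_of_adjoin_eq_top {K R M : Type*} [CommRing K] [Ring R] [Algebra K R]
    [AddCommGroup M] [Module K M] [Module R M] [IsScalarTower K R M] [IsSimpleModule R M]
    {S : Set R} (hS : Algebra.adjoin K S = ⊤) {W : Submodule K M}
    (hW : ∀ x ∈ S, ∀ w ∈ W, x • w ∈ W) : W = ⊥ ∨ W = ⊤ := by
  let W' : Submodule R M :=
    { W with smul_mem' := fun _ _ hw => adjoin_smul_mem hW (hS ▸ Algebra.mem_top) hw }
  have hW' : W'.restrictScalars K = W := rfl
  rw [← hW', Submodule.restrictScalars_eq_bot_iff, Submodule.restrictScalars_eq_top_iff]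
  exact eq_bot_or_eq_top W'

lemma eq_zero_or_isUnit_of_semiconjBy {R V ι : Type*} [CommRing R] [AddCommGroup V] [Module R V]
    {d : Module.End R V} {a : ι → Module.End R V}
    (hirr : ∀ W ∈ d.invtSubmodule, (∀ s, W ∈ (a s).invtSubmodule) → W = ⊥ ∨ W = ⊤)
    {z : Module.End R V} {r : R} (hdz : SemiconjBy z (d + r • 1) d)
    (hz : ∀ s, Commute (a s) z) : z = 0 ∨ IsUnit z := by
  have hdz' (v : V) : d (z v) = z (d v) + r • z v := by
    simpa using (LinearMap.congr_fun hdz.eq v).symm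
  have haz (s : ι) (v : V) : a s (z v) = z (a s v) := LinearMap.congr_fun (hz s).eq v
  have hker := hirr (LinearMap.ker z)
    (fun v hv => by
      rw [LinearMap.mem_ker] at hv
      simpa [hv] using (hdz' v).symm)
    (fun s v hv => by
      rw [LinearMap.mem_ker] at hv
      simpa [hv] using (haz s v).symm)
  have hrange := hirr (LinearMap.range z)
    (by
      rintro _ ⟨v, rfl⟩
      exact ⟨d v + r • v, by rw [map_add, map_smul, hdz']⟩)
    (by
      rintro s _ ⟨v, rfl⟩
      exact ⟨a s v, (haz s v).symm⟩)
  rw [LinearMap.ker_eq_top] at hker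
  rw [LinearMap.range_eq_bot] at hrange
  rw [Module.End.isUnit_iff]
  refine or_iff_not_imp_left.2 fun hz0 => ⟨?_, ?_⟩
  · exact LinearMap.ker_eq_bot.1 (hker.resolve_right hz0)
  · exact LinearMap.range_eq_top.1 (hrange.resolve_left hz0)

end Irreducibility

/-! ### Words of finite excess -/

section ConesOfWords

variable {G : Type*} [AddCommGroup G]

lemma isAddCyclic_of_addGroupCone (C : AddGroupCone G) [HasMemOrNegMem C]
    (hfin : ∀ k, {p | p ∈ C ∧ k - p ∈ C}.Finite) : IsAddCyclic G := by
  classical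
  nontriviality G
  let _ : LinearOrder G := .mkOfAddGroupCone C
  have : IsOrderedAddMonoid G := .mkOfCone C
  let _ : LocallyFiniteOrder G := .ofFiniteIcc fun x y =>
    ((hfin (y - x)).image (· + x)).subset fun z ⟨hxz, hzy⟩ =>
      ⟨z - x, ⟨hxz, by rwa [sub_sub_sub_cancel_right]⟩, sub_add_cancel z x⟩
  exact isAddCyclic_of_surjective (LocallyFiniteOrder.orderAddMonoidEquiv G).symm
    (LocallyFiniteOrder.orderAddMonoidEquiv G).symm.surjective

open Classical in
/-- The excess of a word `w` at `t` is the number of letters `t` minus the number of letters `-t`: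
the part of the letter counts of `w` that cancelling pairs `t, -t` do not affect. -/
def excess (w : List G) (t : G) : ℤ := w.count t - w.count (-t)

lemma excess_append (w w' : List G) : excess (w ++ w') = excess w + excess w' := by
  ext t
  simp only [excess, List.count_append, Nat.cast_add, Pi.add_apply]
  ring

lemma excess_cons (s : G) (w : List G) : excess (s :: w) = excess [s] + excess w :=
  excess_append [s] w

lemma excess_flatten_replicate (m : ℕ) (w : List G) :
    excess (List.replicate m w).flatten = m • excess w := by
  induction m with
  | zero => ext t; simp [excess]
  | succ m ih => rw [List.replicate_succ, List.flatten_cons, excess_append, ih, succ_nsmul']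

lemma excess_neg (w : List G) (t : G) : excess w (-t) = -excess w t := by
  simp only [excess, neg_neg, neg_sub]

lemma excess_zero (w : List G) : excess w 0 = 0 := by
  simp only [excess, neg_zero, sub_self]

lemma mem_of_excess_pos {w : List G} {t : G} (h : 0 < excess w t) : t ∈ w := by
  classical
  by_contra ht
  rw [excess, List.count_eq_zero.2 ht] at h
  omega

lemma excess_pos {w : List G} {t : G} (ht : t ∈ w) (hnt : -t ∉ w) : 0 < excess w t := by
  classical
  simpa [excess, List.count_eq_zero.2 hnt] using ht

/-- A set of letters has finite excess if the words over it with a prescribed sum realize only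
finitely many excess functions. -/
def HasFiniteExcess (S : Set G) : Prop :=
  ∀ k, {e | ∃ w : List G, (∀ s ∈ w, s ∈ S) ∧ w.sum = k ∧ excess w = e}.Finite

namespace HasFiniteExcess

variable {S : Set G} (hS : HasFiniteExcess S)

include hS

lemma excess_eq_zero {w : List G} (hw : ∀ s ∈ w, s ∈ S) (hsum : w.sum = 0) : excess w = 0 := by
  by_contra hne
  have hinj : Function.Injective fun m : ℕ => m • excess w := fun m m' h => by
    obtain ⟨t, ht⟩ := Function.ne_iff.1 hne
    have h' : m • excess w t = m' • excess w t := congrFun h t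
    exact (by simpa using h' : m = m' ∨ excess w t = 0).resolve_right ht
  refine (Set.infinite_range_of_injective hinj).mono ?_ (hS 0)
  rintro _ ⟨m, rfl⟩
  refine ⟨(List.replicate m w).flatten, fun s hs => ?_, ?_, excess_flatten_replicate m w⟩
  · obtain ⟨w', hw', hs⟩ := List.mem_flatten.1 hs
    exact hw s (List.eq_of_mem_replicate hw' ▸ hs)
  · simp only [List.sum_flatten, List.map_replicate, List.sum_replicate, hsum, smul_zero]

variable [IsAddTorsionFree G] (h0 : 0 ∉ S) (htot : ∀ t ≠ 0, t ∈ S ∨ -t ∈ S)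

include h0 htot

lemma neg_notMem {s : G} (hs : s ∈ S) : -s ∉ S := by
  intro hns
  wlog h : -(s + s) ∈ S generalizing s
  · refine this hns (by rwa [neg_neg]) ?_
    rw [← neg_add, neg_neg]
    refine (htot (s + s) fun h0' => h0 ?_).resolve_right h
    rwa [← self_eq_neg.1 (eq_neg_of_add_eq_zero_left h0')]
  have hs0 : s ≠ 0 := ne_of_mem_of_not_mem hs h0
  have hz := hS.excess_eq_zero (w := [s, s, -(s + s)]) (by simp [hs, -neg_add_rev, h])
    (by simp only [List.sum_cons, List.sum_nil]; abel)
  refine (excess_pos (w := [s, s, -(s + s)]) (t := s) (by simp) ?_).ne' (congrFun hz s)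
  simp [neg_eq_self, hs0]

lemma eq_nil_of_sum_eq_zero {w : List G} (hw : ∀ s ∈ w, s ∈ S) (hsum : w.sum = 0) : w = [] :=
  List.eq_nil_iff_forall_not_mem.2 fun s hs =>
    (excess_pos hs fun hns => hS.neg_notMem h0 htot (hw s hs) (hw _ hns)).ne'
      (congrFun (hS.excess_eq_zero hw hsum) s)

lemma add_mem {p q : G} (hp : p ∈ S) (hq : q ∈ S) : p + q ∈ S := by
  have hpq : p + q ≠ 0 := fun h =>
    hS.neg_notMem h0 htot hp (eq_neg_of_add_eq_zero_right h ▸ hq)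
  refine (htot _ hpq).resolve_right fun hr => ?_
  exact List.cons_ne_nil p [q, -(p + q)] <|
    hS.eq_nil_of_sum_eq_zero h0 htot (by simp [hp, hq, -neg_add_rev, hr])
      (by simp only [List.sum_cons, List.sum_nil]; abel)

lemma finite_mem_and_sub_mem (k : G) : {p | p ∈ S ∧ k - p ∈ S}.Finite := by
  refine Set.Finite.of_finite_fibers (fun p => excess [p, k - p]) ?_ fun e he => ?_
  · refine (hS k).subset ?_
    rintro _ ⟨p, hp, rfl⟩
    exact ⟨[p, k - p], by simpa using hp, by simp, rfl⟩
  · obtain ⟨q, -, rfl⟩ := he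
    refine (Set.toFinite {q, k - q}).subset fun p ⟨⟨hp, hkp⟩, hpe⟩ => ?_
    have hpos : 0 < excess [p, k - p] p := excess_pos (by simp) fun h => by
      refine hS.neg_notMem h0 htot hp ?_
      obtain h | h := List.mem_pair.1 h
      · rwa [h]
      · rwa [h]
    rw [show excess [p, k - p] = _ from hpe] at hpos
    simpa using mem_of_excess_pos hpos

/-- The positive cone `S ∪ {0}` of the linear group order defined by a set `S` of finite excess
that meets `{t, -t}` for every `t ≠ 0`. -/
def addGroupCone : AddGroupCone G where
  carrier := insert 0 S
  zero_mem' := Set.mem_insert 0 S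
  add_mem' := by
    rintro p q (rfl | hp) (rfl | hq)
    · simp
    · simp [hq]
    · simp [hp]
    · exact Or.inr (hS.add_mem h0 htot hp hq)
  eq_zero_of_mem_of_neg_mem' := by
    rintro p (rfl | hp) (hnp | hnp)
    · rfl
    · rfl
    · exact neg_eq_zero.1 hnp
    · exact absurd hnp (hS.neg_notMem h0 htot hp)

theorem isAddCyclic : IsAddCyclic G := by
  have : HasMemOrNegMem (hS.addGroupCone h0 htot) := ⟨fun t => by
    obtain rfl | ht := eq_or_ne t 0
    · exact Or.inl (Or.inl rfl)
    · exact (htot t ht).imp Or.inr Or.inr⟩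
  refine isAddCyclic_of_addGroupCone (hS.addGroupCone h0 htot) fun k => ?_
  refine ((hS.finite_mem_and_sub_mem h0 htot k).union (Set.toFinite {0, k})).subset ?_
  rintro p ⟨rfl | hp, hkp | hkp⟩
  · simp
  · simp
  · simp [sub_eq_zero.1 hkp]
  · exact Or.inl ⟨hp, hkp⟩

end HasFiniteExcess

end ConesOfWords

/-! ### Heisenberg systems -/

/-- Operators `a s` indexed by an additive group `Γ` of scalars, such that `a s` has degree `s` for
`d`, opposite operators satisfy the Heisenberg relation `[a s, a (-s)] = b s`, and all
commutators `[a s, a t]` commute with all `a r`. The operators `a s` and `a t` with `s + t ≠ 0`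
are not required to commute. -/
structure HeisenbergSystem {K R : Type*} [Field K] {Γ : AddSubgroup K} [Ring R] [Algebra K R]
    (b : K) (d : R) (a : Γ → R) : Prop where
  lie_deg (s : Γ) : ⁅d, a s⁆ = (s : K) • a s
  lie_neg (s : Γ) : ⁅a s, a (-s)⁆ = (b * s) • 1
  lie_lie (r s t : Γ) : ⁅a r, ⁅a s, a t⁆⁆ = 0

namespace HeisenbergSystem

section Words

variable {K R : Type*} [Field K] {Γ : AddSubgroup K} [Ring R] [Algebra K R]
  {b : K} {d : R} {a : Γ → R} (h : HeisenbergSystem b d a)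

include h

lemma semiconjBy_letter (s : Γ) : SemiconjBy (a s) (d + (s : K) • 1) d := by
  rw [SemiconjBy, mul_add, mul_smul_comm, mul_one, ← h.lie_deg, Ring.lie_def, add_sub_cancel]

lemma semiconjBy_word (w : List Γ) : SemiconjBy (w.map a).prod (d + (w.sum : K) • 1) d := by
  induction w with
  | nil => simp
  | cons s w ih =>
    have hshift := ih.add_right ((Commute.one_right (w.map a).prod).smul_right (s : K))
    rw [List.map_cons, List.prod_cons, List.sum_cons, AddSubgroup.coe_add, add_comm (s : K),
      add_smul, ← add_assoc]
    exact (h.semiconjBy_letter s).mul_left hshift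

variable (hcomm : ∀ s t, s + t ≠ 0 → Commute (a s) (a t))

include hcomm

lemma number_mul_letter (t s : Γ) :
    a t * a (-t) * a s = a s * (a t * a (-t) - (b * t * excess [s] t) • 1) := by
  classical
  have hpos : a t * a s = a s * a t + if s = -t then (b * t) • 1 else 0 := by
    split_ifs with hs
    · rw [hs, ← h.lie_neg, Ring.lie_def, add_sub_cancel]
    · rw [add_zero, (hcomm t s fun hts => hs (eq_neg_of_add_eq_zero_right hts)).eq]
  have hneg : a (-t) * a s = a s * a (-t) - if s = t then (b * t) • 1 else 0 := by
    split_ifs with hs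
    · rw [hs, ← h.lie_neg, Ring.lie_def, sub_sub_cancel]
    · rw [sub_zero, (hcomm (-t) s fun hts => hs (neg_add_eq_zero.1 hts).symm).eq]
  have hexc : (excess [s] t : K) = (if s = t then 1 else 0) - if s = -t then 1 else 0 := by
    simp [excess, List.count_singleton]
  rw [mul_assoc, hneg, mul_sub, ← mul_assoc, hpos, hexc]
  split_ifs with h1 h2 h2
  · simp [add_mul, mul_assoc, h1, h1.symm.trans h2]
  all_goals simp [mul_add, add_mul, mul_sub, mul_assoc, h1, h2]

lemma number_mul_word (t : Γ) (w : List Γ) :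
    a t * a (-t) * (w.map a).prod =
      (w.map a).prod * (a t * a (-t) - (b * t * excess w t) • 1) := by
  induction w with
  | nil => simp [excess]
  | cons s w ih =>
    rw [List.map_cons, List.prod_cons, ← mul_assoc, h.number_mul_letter hcomm, mul_assoc (a s),
      sub_mul, ih, mul_assoc (a s), excess_cons s w, Pi.add_apply, Int.cast_add]
    congr 1
    simp only [mul_add, add_smul, mul_sub, smul_mul_assoc, mul_smul_comm, mul_one, one_mul]
    abel

lemma commute_numbers (s t : Γ) : Commute (a s * a (-s)) (a t * a (-t)) := by
  have he : excess [t, -t] s = 0 := by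
    classical
    simp only [excess, List.count_cons, List.count_nil, beq_iff_eq, neg_eq_iff_eq_neg,
      neg_neg]
    push_cast
    ring
  rw [commute_iff_eq]
  simpa [he] using h.number_mul_word hcomm s [t, -t]

omit hcomm in
lemma commute_deg_number (t : Γ) : Commute d (a t * a (-t)) := by
  rw [commute_iff_eq]
  simpa using (h.semiconjBy_word [t, -t]).eq.symm

end Words

section CommonEigenvector

variable {K V : Type*} [Field K] [AddCommGroup V] [Module K V] {Γ : AddSubgroup K} {b : K}
  {d : Module.End K V} {a : Γ → Module.End K V}

/-- The creation degrees at a joint eigenvector of the number operators `a t * a (-t)` with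
eigenvalues `χ t`: the `s ≠ 0` for which `χ (-s)`, the eigenvalue of `a (-s) * a s`, is not
reduced to zero by the shifts by `-b * s` that letters `s` produce. -/
def creationDegrees (b : K) (χ : Γ → K) : Set Γ :=
  {s | s ≠ 0 ∧ ∀ n : ℕ, χ (-s) ≠ n * (b * s)}

variable (h : HeisenbergSystem b d a) {v : V} (hv : v ≠ 0) {χ : Γ → K}
  (hχ : ∀ t, (a t * a (-t)) v = χ t • v)

include h hv hχ

lemma eigenvalue_neg (t : Γ) : χ (-t) = χ t - b * t := by
  refine smul_left_injective K hv ?_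
  have := LinearMap.congr_fun (h.lie_neg t) v
  simp only [Ring.lie_def, LinearMap.sub_apply, hχ t, LinearMap.smul_apply,
    Module.End.one_apply] at this
  change χ (-t) • v = (χ t - b * t) • v
  rw [← hχ, neg_neg, sub_smul, ← this, sub_sub_cancel]

lemma mem_creationDegrees_or_neg_mem [CharZero K] (hb : b ≠ 0) {t : Γ} (ht : t ≠ 0) :
    t ∈ creationDegrees b χ ∨ -t ∈ creationDegrees b χ := by
  by_contra! hnot
  simp only [creationDegrees, Set.mem_ofPred_eq, ne_eq, ht, neg_eq_zero, not_false_eq_true,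
    true_and, not_forall, not_not, neg_neg, AddSubgroup.coe_neg] at hnot
  obtain ⟨⟨m, hm⟩, n, hn⟩ := hnot
  have hbt : b * (t : K) ≠ 0 := mul_ne_zero hb (by simpa using ht)
  rw [h.eigenvalue_neg hv hχ, hn] at hm
  have : ((m + n + 1 : ℕ) : K) = 0 := by
    refine (mul_eq_zero.1 ?_).resolve_right hbt
    push_cast
    linear_combination -hm
  exact absurd (Nat.cast_eq_zero.1 this) (Nat.succ_ne_zero _)

variable (hcomm : ∀ s t, s + t ≠ 0 → Commute (a s) (a t))

include hcomm

omit hv in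
lemma number_word_apply (w : List Γ) (t : Γ) :
    (a t * a (-t)) ((w.map a).prod v) = (χ t - b * t * excess w t) • (w.map a).prod v := by
  rw [← Module.End.mul_apply, h.number_mul_word hcomm, Module.End.mul_apply, LinearMap.sub_apply,
    hχ, LinearMap.smul_apply, Module.End.one_apply, ← sub_smul, map_smul]

lemma word_apply_ne_zero [CharZero K] {w : List Γ} (hw : ∀ s ∈ w, s ∈ creationDegrees b χ) :
    (w.map a).prod v ≠ 0 := by
  induction w with
  | nil => simpa using hv
  | cons s w ih =>
    obtain ⟨⟨hs0, hs⟩, hw⟩ := List.forall_mem_cons.1 hw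
    specialize ih hw
    rw [List.map_cons, List.prod_cons, Module.End.mul_apply]
    intro hzero
    have heig : χ (-s) = excess w s * (b * s) := by
      have := h.number_word_apply hχ hcomm w (-s)
      rw [neg_neg, Module.End.mul_apply, hzero, map_zero, eq_comm, smul_eq_zero,
        or_iff_left ih, excess_neg] at this
      push_cast at this
      linear_combination this
    obtain hpos | hneg := le_or_gt 0 (excess w s)
    · obtain ⟨n, hn⟩ := Int.eq_ofNat_of_zero_le hpos
      exact hs n (by rw [heig, hn, Int.cast_natCast])
    · have hns : -s ∈ w := mem_of_excess_pos (by rw [excess_neg]; omega)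
      obtain ⟨n, hn⟩ := Int.eq_ofNat_of_zero_le (by omega : 0 ≤ -(excess w s + 1))
      refine (hw _ hns).2 n ?_
      have hn' : (n : K) = -(excess w s + 1) := by
        exact_mod_cast congrArg (Int.cast (R := K)) hn.symm
      have := h.eigenvalue_neg hv hχ s
      rw [neg_neg, hn', AddSubgroup.coe_neg]
      linear_combination heig - this

lemma hasFiniteExcess_creationDegrees [CharZero K] (hb : b ≠ 0) {κ : K} (hdv : d v = κ • v)
    (hfin : ∀ l, FiniteDimensional K (d.eigenspace l)) :
    HasFiniteExcess (creationDegrees b χ) := by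
  intro k
  choose w hw hsum hexc using fun
    e : {e | ∃ w : List Γ, (∀ s ∈ w, s ∈ creationDegrees b χ) ∧ w.sum = k ∧ excess w = e} => e.2
  refine Set.finite_coe_iff.1 <| finite_of_joint_eigenvectors (h.commute_numbers hcomm)
    (χ := fun e t => χ t - b * t * excess (w e) t) (fun e e' hee' => ?_)
    (fun e => h.word_apply_ne_zero hv hχ hcomm (hw e))
    (fun e => h.number_word_apply hχ hcomm (w e)) (d.eigenspace (κ + k)) fun e => ?_
  · refine Subtype.ext ((hexc e).symm.trans ((funext fun t => ?_).trans (hexc e')))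
    obtain rfl | ht := eq_or_ne t 0
    · rw [excess_zero, excess_zero]
    · have hbt : b * (t : K) ≠ 0 := mul_ne_zero hb (by simpa using ht)
      exact Int.cast_injective (mul_left_cancel₀ hbt (sub_right_injective (congrFun hee' t)))
  · rw [Module.End.mem_eigenspace_iff, ← Module.End.mul_apply, ← (h.semiconjBy_word _).eq, hsum]
    simp [hdv, add_smul]

end CommonEigenvector

theorem isAddCyclic_of_commute {K V : Type*} [Field K] [IsAlgClosed K] [CharZero K]
    [AddCommGroup V] [Module K V] {Γ : AddSubgroup K} {b : K} {d : Module.End K V}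
    {a : Γ → Module.End K V} (h : HeisenbergSystem b d a) (hb : b ≠ 0)
    (hcomm : ∀ s t, s + t ≠ 0 → Commute (a s) (a t))
    (hfin : ∀ l, FiniteDimensional K (d.eigenspace l)) {κ : K} (hκ : d.HasEigenvalue κ) :
    IsAddCyclic Γ := by
  have hmaps (t : Γ) := Module.End.mapsTo_genEigenspace_of_comm (h.commute_deg_number t) κ 1
  have : Nontrivial (d.eigenspace κ) := Submodule.nontrivial_iff_ne_bot.2 hκ
  have := hfin κ
  obtain ⟨v, hv, χ, hχ⟩ := exists_common_eigenvector_of_commute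
    (N := fun t => (a t * a (-t)).restrict (hmaps t)) fun s t =>
      LinearMap.ext fun u => Subtype.ext (LinearMap.congr_fun (h.commute_numbers hcomm s t) u)
  have hv' : (v : V) ≠ 0 := Subtype.coe_ne_coe.2 hv
  have hχ' (t : Γ) : (a t * a (-t)) (v : V) = χ t • (v : V) := congrArg Subtype.val (hχ t)
  exact (h.hasFiniteExcess_creationDegrees hv' hχ' hcomm hb (Module.End.mem_eigenspace_iff.1 v.2)
    hfin).isAddCyclic (fun h0 => h0.1 rfl) fun t => h.mem_creationDegrees_or_neg_mem hv' hχ' hb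

section Irreducible

variable {K V : Type*} [Field K] [AddCommGroup V] [Module K V] {Γ : AddSubgroup K} {b : K}
  {d : Module.End K V} {a : Γ → Module.End K V}
  (hirr : ∀ W ∈ d.invtSubmodule, (∀ s, W ∈ (a s).invtSubmodule) → W = ⊥ ∨ W = ⊤)

include hirr

variable [CharZero K] (h : HeisenbergSystem b d a) (hb : b ≠ 0) {κ : K}
  [FiniteDimensional K (d.eigenspace κ)] (hκ : d.HasEigenvalue κ)

include h hb hκ

/-- A nonzero commutator `z = [a s, a t]` would be invertible of degree `r = s + t`, so that
`a r * z⁻¹` and `z * a (-r)` would preserve each eigenspace of `d` and have commutator `b r ≠ 0`. -/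
lemma commute_of_add_ne_zero {s t : Γ} (hst : s + t ≠ 0) : Commute (a s) (a t) := by
  let r := s + t
  have hdz : SemiconjBy ⁅a s, a t⁆ (d + (r : K) • 1) d := by
    have hst := h.semiconjBy_word [s, t]
    have hts := h.semiconjBy_word [t, s]
    simp only [List.map_cons, List.map_nil, List.prod_cons, List.prod_nil, mul_one, List.sum_cons,
      List.sum_nil, add_zero, add_comm t s] at hst hts
    exact hst.sub_left hts
  have hz (q : Γ) : Commute (a q) ⁅a s, a t⁆ := commute_iff_lie_eq.2 (h.lie_lie q s t)
  obtain h0 | ⟨u, hu⟩ := eq_zero_or_isUnit_of_semiconjBy hirr hdz hz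
  · exact commute_iff_lie_eq.2 h0
  exfalso
  rw [← hu] at hdz hz
  have hP : Commute d (a r * ↑u⁻¹) :=
    ((h.semiconjBy_letter r).mul_left hdz.units_inv_symm_left).symm
  have hQ : Commute d (u * a (-r)) := by
    have hshift := (h.semiconjBy_letter (-r)).add_right
      ((Commute.one_right (a (-r))).smul_right (r : K))
    rw [add_assoc, ← add_smul, AddSubgroup.coe_neg, neg_add_cancel, zero_smul, add_zero] at hshift
    exact (hdz.mul_left hshift).symm
  have hPQ : ⁅a r * ↑u⁻¹, u * a (-r)⁆ = (b * r) • (1 : Module.End K V) := by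
    have hleft : a r * ↑u⁻¹ * (u * a (-r)) = a r * a (-r) := by
      rw [mul_assoc, u.inv_mul_cancel_left]
    have hright : u * a (-r) * (a r * ↑u⁻¹) = a (-r) * a r := by
      rw [← (hz (-r)).eq, mul_assoc, ← mul_assoc (u : Module.End K V), ← (hz r).eq,
        u.mul_inv_cancel_right]
    rw [← h.lie_neg, Ring.lie_def, Ring.lie_def, hleft, hright]
  refine mul_ne_zero hb ?_ (eq_zero_of_lie_eq_smul_one hκ hP hQ hPQ)
  simpa using hst

omit [FiniteDimensional K (d.eigenspace κ)]

theorem isAddCyclic_of_irreducible [IsAlgClosed K]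
    (hfin : ∀ l, FiniteDimensional K (d.eigenspace l)) : IsAddCyclic Γ :=
  have := hfin κ
  h.isAddCyclic_of_commute hb (fun _ _ => commute_of_add_ne_zero hirr h hb hκ) hfin hκ

end Irreducible

section Modules

variable {K R : Type*} [Field K] {Γ : AddSubgroup K} [Ring R] [Algebra K R]
  {b : K} {d : R} {a : Γ → R}

lemma map {R' : Type*} [Ring R'] [Algebra K R'] (h : HeisenbergSystem b d a) (f : R →ₐ[K] R') :
    HeisenbergSystem b (f d) (f ∘ a) where
  lie_deg s := by
    simpa only [comp_apply, Ring.lie_def, map_sub, map_mul, map_smul] using congrArg f (h.lie_deg s)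
  lie_neg s := by
    simpa only [comp_apply, Ring.lie_def, map_sub, map_mul, map_smul, map_one]
      using congrArg f (h.lie_neg s)
  lie_lie r s t := by
    simpa only [comp_apply, Ring.lie_def, map_sub, map_mul, map_zero]
      using congrArg f (h.lie_lie r s t)

lemma of_map {R' : Type*} [Ring R'] [Algebra K R'] {f : R →ₐ[K] R'} (hf : Injective f)
    (h : HeisenbergSystem b (f d) (f ∘ a)) : HeisenbergSystem b d a where
  lie_deg s := hf <| by
    simpa only [comp_apply, Ring.lie_def, map_sub, map_mul, map_smul] using h.lie_deg s
  lie_neg s := hf <| by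
    simpa only [comp_apply, Ring.lie_def, map_sub, map_mul, map_smul, map_one] using h.lie_neg s
  lie_lie r s t := hf <| by
    simpa only [comp_apply, Ring.lie_def, map_sub, map_mul, map_zero] using h.lie_lie r s t

variable {M : Type*} [AddCommGroup M] [Module K M] [Module R M] [IsScalarTower K R M]
  (h : HeisenbergSystem b d a) (hgen : Algebra.adjoin K (insert d (Set.range a)) = ⊤)

variable [IsAlgClosed K] [CharZero K] (hb : b ≠ 0)
  {X : Γ → Submodule K M} {κ : K} (hd : ∀ t, ∀ v ∈ X t, d • v = (κ + t) • v)
  (ha : ∀ s t, ∀ v ∈ X t, a s • v ∈ X (t + s))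
  (hfin : ∀ t, FiniteDimensional K (X t)) (hX : X 0 ≠ ⊥)

include h hgen hb hd ha hfin hX

theorem isAddCyclic_of_isSimpleModule [IsSimpleModule R M] : IsAddCyclic Γ := by
  let f : R →ₐ[K] Module.End K M := Algebra.lsmul K K M
  have hirr (W) (hdW : W ∈ (f d).invtSubmodule) (haW : ∀ s, W ∈ (f (a s)).invtSubmodule) :
      W = ⊥ ∨ W = ⊤ :=
    eq_bot_or_eq_top_of_adjoin_eq_top hgen <|
      Set.forall_mem_insert.2 ⟨hdW, Set.forall_mem_range.2 haW⟩
  have hle (t : Γ) : X t ≤ (f d).eigenspace (κ + t) := fun v hv =>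
    Module.End.mem_eigenspace_iff.2 (hd t v hv)
  have hdX : ⨆ t, X t ≤ (⨆ t, X t).comap (f d) := iSup_le fun t v hv =>
    Submodule.mem_iSup_of_mem t (hd t v hv ▸ (X t).smul_mem _ hv : d • v ∈ X t)
  have haX (s : Γ) : ⨆ t, X t ≤ (⨆ t, X t).comap (f (a s)) := iSup_le fun t v hv =>
    Submodule.mem_iSup_of_mem (t + s) (ha s t v hv)
  have htop : ⨆ t, X t = ⊤ :=
    (hirr _ hdX haX).resolve_left fun hbot => hX (iSup_eq_bot.1 hbot 0)
  have hκ : (f d).HasEigenvalue κ := fun hbot =>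
    hX (le_bot_iff.1 (hbot ▸ (by simpa using hle 0)))
  exact (h.map f).isAddCyclic_of_irreducible hirr hb hκ <|
    finiteDimensional_eigenspace_of_iSup_eq_top
      ((add_right_injective κ).comp Subtype.val_injective) hle htop hfin

theorem isAddCyclic_of_graded : IsAddCyclic Γ := by
  obtain ⟨v, hv, hv0⟩ := Submodule.exists_mem_ne_zero_of_ne_bot hX
  let P := Submodule.span R {v}
  let p : P := ⟨v, Submodule.mem_span_singleton_self v⟩
  have hp : p ≠ 0 := fun hp => hv0 (congrArg Subtype.val hp)
  have : Nontrivial P := ⟨p, 0, hp⟩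
  obtain ⟨N, hN⟩ := IsCoatomic.exists_coatom (Submodule R P)
  have : IsSimpleModule R (P ⧸ N) := isSimpleModule_iff_isCoatom.2 hN
  let Y (t : Γ) : Submodule K (P ⧸ N) :=
    ((X t).comap (P.subtype.restrictScalars K)).map (N.mkQ.restrictScalars K)
  refine h.isAddCyclic_of_isSimpleModule hgen hb (X := Y) (κ := κ) ?_ ?_ ?_ ?_
  · rintro t _ ⟨q, hq, rfl⟩
    exact congrArg N.mkQ (Subtype.ext (hd t q hq) : d • q = (κ + t) • q)
  · rintro s t _ ⟨q, hq, rfl⟩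
    exact ⟨a s • q, ha s t q hq, rfl⟩
  · intro t
    have : FiniteDimensional K ((X t).comap (P.subtype.restrictScalars K)) :=
      .of_injective ((P.subtype.restrictScalars K).submoduleComap (X t)) fun q q' hqq' =>
        Subtype.ext (Subtype.ext (congrArg (Subtype.val : X t → M) hqq'))
    exact Module.Finite.map _ _
  · intro hbot
    have hpN : N.mkQ p = 0 := (Submodule.mem_bot K).1 (hbot ▸ ⟨p, hv, rfl⟩)
    refine hN.1 (top_le_iff.1 fun q _ => ?_)
    obtain ⟨r, hr⟩ := Submodule.mem_span_singleton.1 q.2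
    rw [← (Subtype.ext hr : r • p = q)]
    exact N.smul_mem r ((Submodule.Quotient.mk_eq_zero N).1 hpN)

end Modules

theorem isAddCyclic_of_weights {K V : Type*} [Field K] [IsAlgClosed K] [CharZero K]
    [AddCommGroup V] [Module K V] {Γ : AddSubgroup K} {b : K} {d : Module.End K V}
    {a : Γ → Module.End K V} (h : HeisenbergSystem b d a) (hb : b ≠ 0)
    {X : Γ → Submodule K V} {κ : K} (hd : ∀ t, X t ≤ d.eigenspace (κ + t))
    (ha : ∀ s t, X t ≤ (X (t + s)).comap (a s)) (hfin : ∀ t, FiniteDimensional K (X t))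
    (hX : X 0 ≠ ⊥) : IsAddCyclic Γ := by
  let R := Algebra.adjoin K (insert d (Set.range a))
  let d' : R := ⟨d, Algebra.subset_adjoin (Set.mem_insert d _)⟩
  let a' (s : Γ) : R := ⟨a s, Algebra.subset_adjoin (Set.mem_insert_of_mem d ⟨s, rfl⟩)⟩
  have hgen : Algebra.adjoin K (insert d' (Set.range a')) = ⊤ := by
    rw [← Algebra.adjoin_adjoin_coe_preimage (s := insert d (Set.range a))]
    congr 1
    ext x
    simp [d', a', Subtype.ext_iff]
  have h' : HeisenbergSystem b d' a' := .of_map (f := R.val) Subtype.val_injective h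
  exact h'.isAddCyclic_of_graded hgen hb
    (fun t v hv => Module.End.mem_eigenspace_iff.1 (hd t hv)) (fun s t v hv => ha s t hv) hfin hX

end HeisenbergSystem

/-! ### The level form of an extended affine Lie algebra -/

section UnimodularColumns

open Module

lemma exists_unimodular_of_range_eq_span_singleton {R M : Type*} [CommRing R] [IsDomain R]
    [IsPrincipalIdealRing R] [AddCommGroup M] [Module R M] [IsTorsionFree R M] {n : ℕ}
    (φ : (Fin (n + 1) → R) →ₗ[R] M) {m : M} (hm : m ≠ 0) (hφ : LinearMap.range φ = R ∙ m) :
    ∃ P : Matrix (Fin (n + 1)) (Fin (n + 1)) R, IsUnit P.det ∧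
      φ (fun p => P p 0) ≠ 0 ∧ ∀ j ≠ 0, φ (fun p => P p j) = 0 := by
  obtain ⟨y, rfl⟩ : m ∈ LinearMap.range φ := hφ ▸ Submodule.mem_span_singleton_self m
  obtain ⟨r, ⟨B⟩⟩ : ∃ r, Nonempty (Basis (Fin r) R (LinearMap.ker φ)) :=
    ⟨_, ⟨finBasis R (LinearMap.ker φ)⟩⟩
  have hindep (c : R) (x) (hx : x ∈ LinearMap.ker φ) (h : c • y + x = 0) : c = 0 := by
    have := congrArg φ h
    rw [map_add, map_smul, LinearMap.mem_ker.1 hx, add_zero, map_zero] at this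
    exact (smul_eq_zero.1 this).resolve_right hm
  have hspan (z : Fin (n + 1) → R) : ∃ c : R, z + c • y ∈ LinearMap.ker φ := by
    obtain ⟨c, hc⟩ := Submodule.mem_span_singleton.1 (hφ ▸ LinearMap.mem_range_self φ z)
    exact ⟨-c, by rw [LinearMap.mem_ker, map_add, map_smul, ← hc, neg_smul, add_neg_cancel]⟩
  let b := Basis.mkFinCons y B hindep hspan
  have hb : ⇑b = Fin.cons y ((↑) ∘ B) := Basis.coe_mkFinCons y B hindep hspan
  obtain rfl : r = n := by simpa using (finrank_eq_card_basis b).symm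
  refine ⟨(Pi.basisFun R (Fin (r + 1))).toMatrix b, ?_, ?_, fun j hj => ?_⟩
  · exact Basis.isUnit_det _ b
  · change φ (b 0) ≠ 0
    simpa only [hb, Fin.cons_zero] using hm
  · change φ (b j) = 0
    obtain ⟨i, rfl⟩ := Fin.exists_succ_eq.2 hj
    simp only [hb, Fin.cons_succ, comp_apply, LinearMap.map_coe_ker]

end UnimodularColumns

lemma exists_addMonoidHom_section {M N : Type*} [AddCommGroup M] [AddCommGroup N] (φ : M →ₗ[ℤ] N)
    [Module.Projective ℤ (LinearMap.range φ)] :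
    ∃ σ : (LinearMap.range φ).toAddSubgroup →+ M, ∀ s, φ (σ s) = s := by
  obtain ⟨σ, hσ⟩ := Module.projective_lifting_property φ.rangeRestrict LinearMap.id
    φ.surjective_rangeRestrict
  exact ⟨σ.toAddMonoidHom, fun s => congrArg Subtype.val (LinearMap.congr_fun hσ s)⟩

/-- The level form `k ↦ ∑ kᵢ cᵢ`: the scalar by which `∑ kᵢ Kᵢ` acts when each `Kᵢ` acts by `cᵢ`. -/
def levelForm {n : ℕ} (c : Fin (n + 1) → ℂ) : (Fin (n + 1) → ℤ) →ₗ[ℤ] ℂ :=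
  Fintype.linearCombination ℤ c

lemma levelForm_apply {n : ℕ} (c : Fin (n + 1) → ℂ) (k : Fin (n + 1) → ℤ) :
    levelForm c k = ∑ i, (k i : ℂ) * c i := by
  simp only [levelForm, Fintype.linearCombination_apply, zsmul_eq_mul]

lemma levelForm_single {n : ℕ} (c : Fin (n + 1) → ℂ) (i : Fin (n + 1)) :
    levelForm c (Pi.single i 1) = c i := by
  rw [levelForm, Fintype.linearCombination_apply_single, one_smul]

namespace EALARealization

variable {n : ℕ} {𝕘 : Type u} {E : Type v} [LieRing 𝕘] [LieAlgebra ℂ 𝕘]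
  [LieRing E] [LieAlgebra ℂ E] (A : EALARealization n 𝕘 E)

lemma B_symm {i : Fin (n + 1)} (hi : A.K i ≠ 0) (x y : 𝕘) : A.B x y = A.B y x := by
  have hxy := A.emb_bracket_opp (Pi.single i 1) x y
  have hyx := A.emb_bracket_opp (-Pi.single i 1) y x
  simp only [neg_neg, Pi.neg_apply, Pi.single_apply, ite_smul, apply_ite, Int.cast_neg,
    Int.cast_one, Int.cast_zero, neg_smul, one_smul, zero_smul, Finset.sum_ite_eq',
    Finset.mem_univ, if_true, neg_zero] at hxy hyx
  rw [← lie_skew, hxy, ← lie_skew x y, map_neg] at hyx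
  refine smul_left_injective ℂ hi (neg_injective ?_)
  simpa [add_comm (A.emb 0 _)] using hyx

lemma exists_B_self_ne_zero {i : Fin (n + 1)} (hi : A.K i ≠ 0) : ∃ x, A.B x x ≠ 0 :=
  LinearMap.BilinForm.exists_bilinForm_self_ne_zero A.B_ne_zero ⟨A.B_symm hi⟩

variable (V : Type w) [AddCommGroup V] [Module ℂ V] [LieRingModule E V] [LieModule ℂ E V]

/-- The operator `∑ cᵢ dᵢ`, for which `x ⊗ t^k` has degree `levelForm c k`. -/
def levelDegree (c : Fin (n + 1) → ℂ) : Module.End ℂ V :=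
  LieModule.toEnd ℂ E V (∑ i, c i • A.d i)

variable {V} {c : Fin (n + 1) → ℂ}

lemma sum_smul_K_lie (hc : ∀ i, ∀ v : V, ⁅A.K i, v⁆ = c i • v) (k : Fin (n + 1) → ℤ) (v : V) :
    ⁅∑ i, (k i : ℂ) • A.K i, v⁆ = levelForm c k • v := by
  simp only [sum_lie, smul_lie, hc, smul_smul, levelForm_apply, Finset.sum_smul]

lemma sum_smul_d_lie_emb (k : Fin (n + 1) → ℤ) (x : 𝕘) :
    ⁅∑ i, c i • A.d i, A.emb k x⁆ = levelForm c k • A.emb k x := by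
  simp only [sum_lie, smul_lie, A.d_bracket_emb, smul_smul, levelForm_apply, Finset.sum_smul,
    mul_comm]

attribute [local instance] LieRing.ofAssociativeRing in
lemma heisenbergSystem (hc : ∀ i, ∀ v : V, ⁅A.K i, v⁆ = c i • v)
    {σ : (LinearMap.range (levelForm c)).toAddSubgroup →+ (Fin (n + 1) → ℤ)}
    (hσ : ∀ s, levelForm c (σ s) = s) (x : 𝕘) :
    HeisenbergSystem (A.B x x) (A.levelDegree V c)
      (fun s => LieModule.toEnd ℂ E V (A.emb (σ s) x)) where
  lie_deg s := by
    rw [levelDegree, ← LieHom.map_lie, sum_smul_d_lie_emb, hσ, map_smul]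
  lie_neg s := by
    ext v
    rw [← LieHom.map_lie, map_neg, A.emb_bracket_opp, lie_self, map_zero, zero_add, map_smul,
      LinearMap.smul_apply, LieModule.toEnd_apply_apply, A.sum_smul_K_lie hc, hσ, smul_smul]
    rfl
  lie_lie r s t := by
    have hC := A.emb_bracket_mem (σ s) (σ t) x x
    rw [lie_self, map_zero, sub_zero] at hC
    rw [← LieHom.map_lie, ← LieHom.map_lie, ← lie_skew, A.C_bracket_loop _ hC, neg_zero, map_zero]

lemma dWeight_le_eigenspace (μ : Fin (n + 1) → ℂ) :
    A.dWeight V μ ≤ (A.levelDegree V c).eigenspace (∑ i, c i * μ i) := by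
  intro v hv
  rw [Module.End.mem_eigenspace_iff, levelDegree, LieModule.toEnd_apply_apply]
  simp only [sum_lie, smul_lie, hv _, smul_smul, Finset.sum_smul]

lemma emb_lie_mem_dWeight {μ : Fin (n + 1) → ℂ} {v : V} (hv : v ∈ A.dWeight V μ)
    (k : Fin (n + 1) → ℤ) (x : 𝕘) :
    ⁅A.emb k x, v⁆ ∈ A.dWeight V (μ + fun i => (k i : ℂ)) := by
  intro i
  rw [leibniz_lie, A.d_bracket_emb, hv i, smul_lie, lie_smul, ← add_smul, Pi.add_apply,
    add_comm]

lemma exists_dWeight_ne_bot (htop : ⨆ μ, A.dWeight V μ = ⊤) (hV : ∃ v : V, v ≠ 0) :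
    ∃ μ, A.dWeight V μ ≠ ⊥ := by
  obtain ⟨v, hv⟩ := hV
  have : Nontrivial V := nontrivial_of_ne v 0 hv
  by_contra! hbot
  exact bot_ne_top ((iSup_eq_bot.2 hbot).symm.trans htop)

theorem isAddCyclic_range_levelForm (hc : ∀ i, ∀ v : V, ⁅A.K i, v⁆ = c i • v)
    (hlvl : ∃ i, c i ≠ 0) (hfin : ∀ μ, FiniteDimensional ℂ (A.dWeight V μ))
    {μ : Fin (n + 1) → ℂ} (hμ : A.dWeight V μ ≠ ⊥) :
    IsAddCyclic (LinearMap.range (levelForm c)).toAddSubgroup := by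
  obtain ⟨i, hi⟩ := hlvl
  obtain ⟨v, -, hv⟩ := Submodule.exists_mem_ne_zero_of_ne_bot hμ
  have hK : A.K i ≠ 0 := fun hK => smul_ne_zero hi hv (by rw [← hc, hK, zero_lie])
  obtain ⟨x, hx⟩ := A.exists_B_self_ne_zero hK
  obtain ⟨σ, hσ⟩ := exists_addMonoidHom_section (levelForm c)
  refine (A.heisenbergSystem hc hσ x).isAddCyclic_of_weights hx
    (X := fun s => A.dWeight V (μ + fun i => (σ s i : ℂ))) (κ := ∑ i, c i * μ i)
    (fun t => ?_) (fun s t v hv => ?_) (fun t => hfin _) ?_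
  · have hweight : ∑ i, c i * (μ + fun i => (σ t i : ℂ)) i = ∑ i, c i * μ i + t := by
      rw [← hσ t, levelForm_apply, ← Finset.sum_add_distrib]
      simp only [Pi.add_apply, mul_add, mul_comm]
    exact hweight ▸ A.dWeight_le_eigenspace _
  · have hweight : (μ + (fun i => (σ t i : ℂ)) + fun i => (σ s i : ℂ)) =
        μ + fun i => (σ (t + s) i : ℂ) := by
      ext i
      simp [add_assoc]
    exact hweight ▸ A.emb_lie_mem_dWeight hv (σ s) x
  · convert hμ
    ext i
    simp

end EALARealization

theorem nonzero_level_normalization_general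
    {n : ℕ} {𝕘 : Type u} {E : Type v} [LieRing 𝕘] [LieAlgebra ℂ 𝕘] [LieRing E] [LieAlgebra ℂ E]
    (A : EALARealization n 𝕘 E)
    {V : Type w} [AddCommGroup V] [Module ℂ V] [LieRingModule E V] [LieModule ℂ E V]
    (hfin : ∀ μ, FiniteDimensional ℂ (A.dWeight V μ))
    {μ : Fin (n + 1) → ℂ} (hμ : A.dWeight V μ ≠ ⊥)
    {c : Fin (n + 1) → ℂ} (hc : ∀ i, ∀ v : V, ⁅A.K i, v⁆ = c i • v) (hlvl : ∃ i, c i ≠ 0) :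
    ∃ P : Matrix (Fin (n + 1)) (Fin (n + 1)) ℤ, IsUnit P.det ∧
      (∑ p, (P p 0 : ℂ) * c p ≠ 0) ∧
      ∀ j : Fin (n + 1), j ≠ 0 → (∑ p, (P p j : ℂ) * c p) = 0 := by
  obtain ⟨⟨m, hm⟩, hgen⟩ := (A.isAddCyclic_range_levelForm hc hlvl hfin hμ).exists_zsmul_surjective
  have hrange : LinearMap.range (levelForm c) = ℤ ∙ m := by
    refine le_antisymm (fun z hz => ?_) ((Submodule.span_singleton_le_iff_mem _ _).2 hm)
    obtain ⟨k, hk⟩ := hgen ⟨z, hz⟩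
    exact Submodule.mem_span_singleton.2 ⟨k, congrArg Subtype.val hk⟩
  have hm0 : m ≠ 0 := by
    rintro rfl
    obtain ⟨i, hi⟩ := hlvl
    rw [Submodule.span_zero_singleton, LinearMap.range_eq_bot] at hrange
    exact hi (by rw [← levelForm_single c i, hrange, LinearMap.zero_apply])
  simpa only [levelForm_apply] using exists_unimodular_of_range_eq_span_singleton _ hm0 hrange

/-! ### Statement 13 -/

/-- **Lemma 7.4.** If `V` is an irreducible quasi-finite module of non-zero level
over an untwisted fgc EALA `E_{n+1}`, then up to a twist by an automorphism coming
from the action of `GL(n+1, ℤ)`, one may assume that `K 0` acts by a non-zero scalar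
while `K 1, …, K n` act by zero.  Concretely: if `K i` acts on `V` by the scalar
`c i` and some `c i ≠ 0`, then there is a matrix `P ∈ GL(n+1, ℤ)` such that the
transformed central character `j ↦ ∑ p, P p j • c p` (which is the tuple of scalars
by which the twisted central elements `T_P (K j) = ∑ p, P p j • K p` act) is non-zero
at `j = 0` and zero at every `j ≠ 0`. -/
theorem nonzero_level_normalization
    {n : ℕ}
    {𝕘 : Type u} {E : Type v} [LieRing 𝕘] [LieAlgebra ℂ 𝕘]
    [FiniteDimensional ℂ 𝕘] [LieAlgebra.IsSimple ℂ 𝕘]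
    [LieRing E] [LieAlgebra ℂ E]
    (A : EALARealization n 𝕘 E) (td : TriangularData 𝕘)
    (V : Type w) [AddCommGroup V] [Module ℂ V] [LieRingModule E V] [LieModule ℂ E V]
    (hirr : IsIrreducibleLieModule E V) (hqf : A.IsQuasiFinite V)
    (c : Fin (n + 1) → ℂ) (hc : ∀ i, ∀ v : V, ⁅A.K i, v⁆ = c i • v)
    (hlvl : ∃ i, c i ≠ 0) :
    ∃ P : Matrix (Fin (n + 1)) (Fin (n + 1)) ℤ, IsUnit P.det ∧
      (∑ p, (P p 0 : ℂ) * c p ≠ 0) ∧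
      ∀ j : Fin (n + 1), j ≠ 0 → (∑ p, (P p j : ℂ) * c p) = 0 := by
  obtain ⟨μ, hμ⟩ := A.exists_dWeight_ne_bot hqf.1 hirr.1
  exact nonzero_level_normalization_general A hqf.2 hμ hc hlvl

end
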